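/- arXiv:2505.20621 — 8 statements merged into one kernel-verified Lean document; each statement's English description precedes it below -/
import Mathlib

section
/- Let b > 0, ε ≥ 0, δ ≥ 0, and let μ and ν be Borel probability measures on ℝ, both supported on the interval [0, b] (i.e., μ([0,b]) = ν([0,b]) = 1). If μ satisfies the (ε, δ)-ADP outcomes guarantee relative to ν, then ∫ x dμ(x) ≤ e^ε · (∫ x dν(x)) + b·δ. -/
open MeasureTheory

/-!
By the layer cake formula, the mean of a variable with values in `[0, b]` is the integral over
`(0, b]` of its tail function `t ↦ μ {t ≤ f}`. Integrating the bound on tails over `(0, b]` turns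
the additive error `δ` into `b * δ`.
-/

section LayerCake

variable {α : Type*} [MeasurableSpace α] {μ : Measure α} {f : α → ℝ}

lemma integrableOn_Ioi_measureReal_le (hf : Integrable f μ) (hf_nonneg : 0 ≤ᵐ[μ] f) :
    IntegrableOn (fun t ↦ μ.real {a | t ≤ f a}) (Set.Ioi 0) := by
  have tail_anti : Antitone fun t ↦ μ {a | t ≤ f a} :=
    fun _ _ hst ↦ measure_mono fun _ ↦ hst.trans
  refine integrable_toReal_of_lintegral_ne_top tail_anti.measurable.aemeasurable ?_
  rw [← lintegral_eq_lintegral_meas_le μ hf_nonneg hf.aemeasurable]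
  exact hf.lintegral_lt_top.ne

lemma setIntegral_Ioc_measureReal_le_le_integral (hf : Integrable f μ) (hf_nonneg : 0 ≤ᵐ[μ] f)
    (b : ℝ) : ∫ t in Set.Ioc 0 b, μ.real {a | t ≤ f a} ≤ ∫ a, f a ∂μ := by
  rw [hf.integral_eq_integral_meas_le hf_nonneg]
  exact setIntegral_mono_set (integrableOn_Ioi_measureReal_le hf hf_nonneg)
    (.of_forall fun _ ↦ measureReal_nonneg) Set.Ioc_subset_Ioi_self.eventuallyLE

end LayerCake

theorem adp_expected_outcomes_upper_general {α : Type*} [MeasurableSpace α] {μ ν : Measure α}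
    {f : α → ℝ} {b c δ : ℝ} (hb : 0 ≤ b) (hc : 0 ≤ c)
    (hfμ : Integrable f μ) (hfν : Integrable f ν)
    (hμ_mem : ∀ᵐ a ∂μ, f a ∈ Set.Icc 0 b) (hν_nonneg : 0 ≤ᵐ[ν] f)
    (h_tail : ∀ t ∈ Set.Ioc 0 b, μ.real {a | t ≤ f a} ≤ c * ν.real {a | t ≤ f a} + δ) :
    ∫ a, f a ∂μ ≤ c * (∫ a, f a ∂ν) + b * δ := by
  have tail_int : IntegrableOn (fun t ↦ c * ν.real {a | t ≤ f a}) (Set.Ioc 0 b) :=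
    ((integrableOn_Ioi_measureReal_le hfν hν_nonneg).mono_set Set.Ioc_subset_Ioi_self).const_mul c
  have const_int : IntegrableOn (fun _ : ℝ ↦ δ) (Set.Ioc 0 b) :=
    integrableOn_const measure_Ioc_lt_top.ne
  calc ∫ a, f a ∂μ
      = ∫ t in Set.Ioc 0 b, μ.real {a | t ≤ f a} :=
        hfμ.integral_eq_integral_Ioc_meas_le (hμ_mem.mono fun _ h ↦ h.1) (hμ_mem.mono fun _ h ↦ h.2)
    _ ≤ ∫ t in Set.Ioc 0 b, (c * ν.real {a | t ≤ f a} + δ) :=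
        integral_mono_of_nonneg (.of_forall fun _ ↦ measureReal_nonneg) (tail_int.add const_int)
          (ae_restrict_of_forall_mem measurableSet_Ioc h_tail)
    _ = c * (∫ t in Set.Ioc 0 b, ν.real {a | t ≤ f a}) + b * δ := by
        rw [integral_add tail_int const_int, integral_const_mul]
        simp [hb]
    _ ≤ c * (∫ a, f a ∂ν) + b * δ := by
        gcongr
        exact setIntegral_Ioc_measureReal_le_le_integral hfν hν_nonneg b

theorem adp_expected_outcomes_upper
    (b ε δ : ℝ) (hb : 0 < b) (hε : 0 ≤ ε) (hδ : 0 ≤ δ)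
    (μ ν : Measure ℝ) [IsProbabilityMeasure μ] [IsProbabilityMeasure ν]
    (hμsupp : μ (Set.Icc 0 b) = 1) (hνsupp : ν (Set.Icc 0 b) = 1)
    (hADP : ∀ S : Set ℝ, MeasurableSet S →
      (μ S).toReal ≤ Real.exp ε * (ν S).toReal + δ) :
    ∫ x, x ∂μ ≤ Real.exp ε * (∫ x, x ∂ν) + b * δ := by
  have hμ : ∀ᵐ x ∂μ, x ∈ Set.Icc 0 b := (mem_ae_iff_prob_eq_one measurableSet_Icc).2 hμsupp
  have hν : ∀ᵐ x ∂ν, x ∈ Set.Icc 0 b := (mem_ae_iff_prob_eq_one measurableSet_Icc).2 hνsupp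
  exact adp_expected_outcomes_upper_general hb.le (Real.exp_nonneg ε)
    (.of_mem_Icc 0 b aemeasurable_id hμ) (.of_mem_Icc 0 b aemeasurable_id hν) hμ
    (hν.mono fun _ h ↦ h.1) fun _ _ ↦ hADP _ measurableSet_Ici
end

section
/- Let b > 0, ε ≥ 0, δ ≥ 0, and let μ and ν be Borel probability measures on ℝ, both supported on the interval [0, b]. If ν satisfies the (ε, δ)-ADP outcomes guarantee relative to μ, then ∫ x dμ(x) ≥ e^{−ε} · ((∫ x dν(x)) − b·δ). -/
/-!
By the layer-cake formula, the expectation of a variable with values in `[0, b]` is the integral of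
its tail `t ↦ ν {t ≤ Y}` over `(0, b]`. The ADP guarantee, applied to the superlevel sets only,
bounds the tail of `Y` by `e ^ ε` times the tail of `X`, plus `δ`. Over `(0, b]`, the tail of `X`
integrates to at most `𝔼 X` and `δ` to `b * δ`, so `𝔼 Y ≤ e ^ ε * 𝔼 X + b * δ`.
-/

open MeasureTheory

section Tail

open Set
open scoped ENNReal

variable {α β : Type*} [MeasurableSpace α] [MeasurableSpace β] {μ : Measure α} {ν : Measure β}
  {X : α → ℝ} {Y : β → ℝ} {b : ℝ}

lemma antitone_measure_ge (μ : Measure α) (X : α → ℝ) : Antitone fun t ↦ μ {a | t ≤ X a} :=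
  fun _ _ hst ↦ measure_mono fun _ ha ↦ hst.trans ha

lemma measure_ge_eq_zero_of_ae_le {t : ℝ} (hX : ∀ᵐ a ∂μ, X a ≤ b) (hbt : b < t) :
    μ {a | t ≤ X a} = 0 := by
  rw [measure_eq_zero_iff_ae_notMem]
  filter_upwards [hX] with a ha using not_le.2 (ha.trans_lt hbt)

lemma lintegral_ofReal_eq_setLIntegral_Ioc_meas_ge (hX : AEMeasurable X μ)
    (hXb : ∀ᵐ a ∂μ, X a ∈ Icc 0 b) :
    ∫⁻ a, ENNReal.ofReal (X a) ∂μ = ∫⁻ t in Ioc 0 b, μ {a | t ≤ X a} := by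
  have tail_support : Function.support (fun t ↦ μ {a | t ≤ X a}) ⊆ Iic b := fun t ht ↦
    not_lt.1 fun hbt ↦ ht (measure_ge_eq_zero_of_ae_le (hXb.mono fun _ ha ↦ ha.2) hbt)
  rw [lintegral_eq_lintegral_meas_le μ (hXb.mono fun _ ha ↦ ha.1) hX, ← Ioi_inter_Iic, inter_comm,
    ← setLIntegral_indicator measurableSet_Iic, indicator_eq_self.2 tail_support]

lemma lintegral_ofReal_le_mul_add_of_meas_ge_le {c δ : ℝ≥0∞} (hX : AEMeasurable X μ)
    (hX0 : 0 ≤ᵐ[μ] X) (hY : AEMeasurable Y ν) (hYb : ∀ᵐ y ∂ν, Y y ∈ Icc 0 b)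
    (h_tail : ∀ t ∈ Ioc 0 b, ν {y | t ≤ Y y} ≤ c * μ {x | t ≤ X x} + δ) :
    ∫⁻ y, ENNReal.ofReal (Y y) ∂ν ≤
      c * ∫⁻ x, ENNReal.ofReal (X x) ∂μ + ENNReal.ofReal b * δ := by
  have tail_measurable : Measurable fun t ↦ μ {x | t ≤ X x} := (antitone_measure_ge μ X).measurable
  calc
    ∫⁻ y, ENNReal.ofReal (Y y) ∂ν = ∫⁻ t in Ioc 0 b, ν {y | t ≤ Y y} :=
      lintegral_ofReal_eq_setLIntegral_Ioc_meas_ge hY hYb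
    _ ≤ ∫⁻ t in Ioc 0 b, (c * μ {x | t ≤ X x} + δ) := setLIntegral_mono' measurableSet_Ioc h_tail
    _ = c * (∫⁻ t in Ioc 0 b, μ {x | t ≤ X x}) + ENNReal.ofReal b * δ := by
      rw [lintegral_add_right _ measurable_const, lintegral_const_mul _ tail_measurable,
        setLIntegral_const, Real.volume_Ioc, sub_zero, mul_comm δ]
    _ ≤ c * (∫⁻ t in Ioi 0, μ {x | t ≤ X x}) + ENNReal.ofReal b * δ := by
      gcongr
      exact Ioc_subset_Ioi_self
    _ = c * ∫⁻ x, ENNReal.ofReal (X x) ∂μ + ENNReal.ofReal b * δ := by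
      rw [lintegral_eq_lintegral_meas_le μ hX0 hX]

lemma integral_le_mul_add_of_measureReal_ge_le {c δ : ℝ} (hb : 0 ≤ b) (hc : 0 ≤ c) (hδ : 0 ≤ δ)
    (hX : Integrable X μ) (hX0 : 0 ≤ᵐ[μ] X) (hY : Integrable Y ν)
    (hYb : ∀ᵐ y ∂ν, Y y ∈ Icc 0 b)
    (h_tail : ∀ t ∈ Ioc 0 b, ν.real {y | t ≤ Y y} ≤ c * μ.real {x | t ≤ X x} + δ) :
    ∫ y, Y y ∂ν ≤ c * ∫ x, X x ∂μ + b * δ := by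
  have hY0 : 0 ≤ᵐ[ν] Y := hYb.mono fun _ hy ↦ hy.1
  have hX_int : 0 ≤ ∫ x, X x ∂μ := integral_nonneg_of_ae hX0
  have h_tail_ennreal (t : ℝ) (ht : t ∈ Ioc 0 b) :
      ν {y | t ≤ Y y} ≤ ENNReal.ofReal c * μ {x | t ≤ X x} + ENNReal.ofReal δ := by
    rw [← ofReal_measureReal (hY.measure_ge_lt_top ht.1).ne,
      ← ofReal_measureReal (hX.measure_ge_lt_top ht.1).ne, ← ENNReal.ofReal_mul hc,
      ← ENNReal.ofReal_add (by positivity) hδ]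
    exact ENNReal.ofReal_le_ofReal (h_tail t ht)
  rw [← ENNReal.ofReal_le_ofReal_iff (by positivity), ENNReal.ofReal_add (by positivity)
    (by positivity), ENNReal.ofReal_mul hc, ENNReal.ofReal_mul hb,
    ofReal_integral_eq_lintegral_ofReal hX hX0, ofReal_integral_eq_lintegral_ofReal hY hY0]
  exact lintegral_ofReal_le_mul_add_of_meas_ge_le hX.aemeasurable hX0 hY.aemeasurable hYb
    h_tail_ennreal

theorem adp_expected_outcomes_lower_general {ε δ : ℝ} (hb : 0 ≤ b) (hδ : 0 ≤ δ)
    (hX : Integrable X μ) (hX0 : 0 ≤ᵐ[μ] X) (hY : Integrable Y ν)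
    (hYb : ∀ᵐ y ∂ν, Y y ∈ Icc 0 b)
    (hADP : ∀ t ∈ Ioc 0 b, ν.real {y | t ≤ Y y} ≤ Real.exp ε * μ.real {x | t ≤ X x} + δ) :
    Real.exp (-ε) * ((∫ y, Y y ∂ν) - b * δ) ≤ ∫ x, X x ∂μ := by
  rw [Real.exp_neg, inv_mul_le_iff₀ (Real.exp_pos ε), sub_le_iff_le_add]
  exact integral_le_mul_add_of_measureReal_ge_le hb (Real.exp_pos ε).le hδ hX hX0 hY hYb hADP

end Tail

theorem adp_expected_outcomes_lower
    (b ε δ : ℝ) (hb : 0 < b) (hε : 0 ≤ ε) (hδ : 0 ≤ δ)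
    (μ ν : Measure ℝ) [IsProbabilityMeasure μ] [IsProbabilityMeasure ν]
    (hμsupp : μ (Set.Icc 0 b) = 1) (hνsupp : ν (Set.Icc 0 b) = 1)
    (hADP : ∀ S : Set ℝ, MeasurableSet S →
      (ν S).toReal ≤ Real.exp ε * (μ S).toReal + δ) :
    ∫ x, x ∂μ ≥ Real.exp (-ε) * ((∫ x, x ∂ν) - b * δ) := by
  have hμ : ∀ᵐ x ∂μ, x ∈ Set.Icc 0 b := (mem_ae_iff_prob_eq_one measurableSet_Icc).2 hμsupp
  have hν : ∀ᵐ x ∂ν, x ∈ Set.Icc 0 b := (mem_ae_iff_prob_eq_one measurableSet_Icc).2 hνsupp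
  exact adp_expected_outcomes_lower_general hb.le hδ (.of_mem_Icc 0 b aemeasurable_id hμ)
    (hμ.mono fun _ hx ↦ hx.1) (.of_mem_Icc 0 b aemeasurable_id hν) hν
    fun _ _ ↦ hADP _ measurableSet_Ici
end

section
/- Let b > 0, ε ≥ 0, α > 1, and let μ and ν be Borel probability measures on ℝ, both supported on the interval [0, b]. If μ satisfies the (ε, α)-RDP outcomes guarantee relative to ν, then ∫ x dμ(x) ≤ b^{1/α} · (e^ε · ∫ x dν(x))^{(α−1)/α}. -/
open MeasureTheory

/-!
By the layer cake formula the mean of `μ` is the integral over `(0, b]` of the tails `μ [t, ∞)`.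
The hypothesis bounds each tail by `(e ^ ε * ν [t, ∞)) ^ p` with `p = (α - 1) / α`, and Hölder's
inequality on an interval of length `b` moves the power outside the integral at the cost of the
factor `b ^ (1 - p)`. Replacing `(0, b]` by `(0, ∞)` in the integral of the tails of `ν` then only
increases the bound, to the mean of `ν`.
-/

open ENNReal Set

section TailComparison

variable {Ω Ω' : Type*} [MeasurableSpace Ω] [MeasurableSpace Ω'] {μ : Measure Ω} {ν : Measure Ω'}

theorem lintegral_rpow_le_rpow_lintegral_mul {f : Ω → ℝ≥0∞} (hf : AEMeasurable f μ) {p q : ℝ}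
    (hp : 0 ≤ p) (hq : 0 ≤ q) (hpq : p + q = 1) :
    ∫⁻ ω, f ω ^ p ∂μ ≤ (∫⁻ ω, f ω ∂μ) ^ p * μ univ ^ q := by
  simpa using lintegral_mul_norm_pow_le hf (aemeasurable_const (b := 1)) hp hq hpq

theorem lintegral_ofReal_eq_lintegral_meas_le {X : Ω → ℝ} (hX : AEMeasurable X μ) :
    ∫⁻ ω, ENNReal.ofReal (X ω) ∂μ = ∫⁻ t in Ioi 0, μ {ω | t ≤ X ω} := by
  have layer_cake := lintegral_eq_lintegral_meas_le μ (f := fun ω ↦ max (X ω) 0)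
    (ae_of_all μ fun ω ↦ le_max_right (X ω) 0) (hX.max aemeasurable_const)
  calc ∫⁻ ω, ENNReal.ofReal (X ω) ∂μ
      = ∫⁻ ω, ENNReal.ofReal (max (X ω) 0) ∂μ := by simp
    _ = ∫⁻ t in Ioi 0, μ {ω | t ≤ max (X ω) 0} := layer_cake
    _ = ∫⁻ t in Ioi 0, μ {ω | t ≤ X ω} :=
        setLIntegral_congr_fun measurableSet_Ioi fun t (ht : 0 < t) ↦ by
          simp only [le_max_iff, ht.not_ge, or_false]

theorem lintegral_ofReal_eq_setLIntegral_Ioc_meas_le {X : Ω → ℝ} {b : ℝ} (hX : AEMeasurable X μ)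
    (hXb : ∀ᵐ ω ∂μ, X ω ≤ b) :
    ∫⁻ ω, ENNReal.ofReal (X ω) ∂μ = ∫⁻ t in Ioc 0 b, μ {ω | t ≤ X ω} := by
  have tail_support : (fun t ↦ μ {ω | t ≤ X ω}).support ⊆ Iic b := by
    refine Function.support_subset_iff'.2 fun t ht ↦ measure_eq_zero_iff_ae_notMem.2 ?_
    filter_upwards [hXb] with ω hω using (hω.trans_lt (not_le.1 ht)).not_ge
  rw [lintegral_ofReal_eq_lintegral_meas_le hX, ← Iic_inter_Ioi,
    ← Measure.restrict_restrict measurableSet_Iic, setLIntegral_eq_of_support_subset tail_support]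

theorem lintegral_ofReal_le_of_meas_le {X : Ω → ℝ} {Y : Ω' → ℝ} {b p q : ℝ} {C : ℝ≥0∞}
    (hX : AEMeasurable X μ) (hXb : ∀ᵐ ω ∂μ, X ω ≤ b) (hY : AEMeasurable Y ν)
    (hp : 0 ≤ p) (hq : 0 ≤ q) (hpq : p + q = 1)
    (htail : ∀ t ∈ Ioc 0 b, μ {ω | t ≤ X ω} ≤ (C * ν {ω | t ≤ Y ω}) ^ p) :
    ∫⁻ ω, ENNReal.ofReal (X ω) ∂μ
      ≤ ENNReal.ofReal b ^ q * (C * ∫⁻ ω, ENNReal.ofReal (Y ω) ∂ν) ^ p := by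
  have tail_measurable : Measurable fun t ↦ ν {ω | t ≤ Y ω} :=
    Antitone.measurable fun _ _ hst ↦ measure_mono fun _ ↦ hst.trans
  calc ∫⁻ ω, ENNReal.ofReal (X ω) ∂μ
      = ∫⁻ t in Ioc 0 b, μ {ω | t ≤ X ω} := lintegral_ofReal_eq_setLIntegral_Ioc_meas_le hX hXb
    _ ≤ ∫⁻ t in Ioc 0 b, (C * ν {ω | t ≤ Y ω}) ^ p := setLIntegral_mono' measurableSet_Ioc htail
    _ ≤ (∫⁻ t in Ioc 0 b, C * ν {ω | t ≤ Y ω}) ^ p * ENNReal.ofReal b ^ q := by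
        simpa using lintegral_rpow_le_rpow_lintegral_mul (μ := volume.restrict (Ioc 0 b))
          (tail_measurable.const_mul C).aemeasurable hp hq hpq
    _ ≤ (C * ∫⁻ ω, ENNReal.ofReal (Y ω) ∂ν) ^ p * ENNReal.ofReal b ^ q := by
        rw [lintegral_const_mul C tail_measurable, lintegral_ofReal_eq_lintegral_meas_le hY]
        gcongr
        exact Ioc_subset_Ioi_self
    _ = ENNReal.ofReal b ^ q * (C * ∫⁻ ω, ENNReal.ofReal (Y ω) ∂ν) ^ p := mul_comm _ _

theorem ofReal_integral_le_lintegral_ofReal {X : Ω → ℝ} (hX : Integrable X μ) :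
    ENNReal.ofReal (∫ ω, X ω ∂μ) ≤ ∫⁻ ω, ENNReal.ofReal (X ω) ∂μ := by
  rw [integral_eq_lintegral_pos_part_sub_lintegral_neg_part hX]
  exact (ofReal_le_ofReal (sub_le_self _ toReal_nonneg)).trans ofReal_toReal_le

theorem rdp_expected_outcomes_upper_general {X : Ω → ℝ} {Y : Ω' → ℝ} {b C p q : ℝ}
    (hb : 0 ≤ b) (hC : 0 ≤ C) (hp : 0 ≤ p) (hq : 0 ≤ q) (hpq : p + q = 1)
    (hX : Integrable X μ) (hXb : ∀ᵐ ω ∂μ, X ω ≤ b)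
    (hY : Integrable Y ν) (hY0 : ∀ᵐ ω ∂ν, 0 ≤ Y ω)
    (htail : ∀ t ∈ Ioc 0 b, μ.real {ω | t ≤ X ω} ≤ (C * ν.real {ω | t ≤ Y ω}) ^ p) :
    ∫ ω, X ω ∂μ ≤ b ^ q * (C * ∫ ω, Y ω ∂ν) ^ p := by
  have hY_mean : 0 ≤ ∫ ω, Y ω ∂ν := integral_nonneg_of_ae hY0
  have htail' : ∀ t ∈ Ioc 0 b,
      μ {ω | t ≤ X ω} ≤ (ENNReal.ofReal C * ν {ω | t ≤ Y ω}) ^ p := fun t ht ↦ by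
    rw [← ofReal_measureReal (hX.measure_ge_lt_top ht.1).ne,
      ← ofReal_measureReal (hY.measure_ge_lt_top ht.1).ne, ← ofReal_mul hC,
      ofReal_rpow_of_nonneg (by positivity) hp]
    exact ofReal_le_ofReal (htail t ht)
  refine (ofReal_le_ofReal_iff (by positivity)).1 ?_
  calc ENNReal.ofReal (∫ ω, X ω ∂μ)
      ≤ ∫⁻ ω, ENNReal.ofReal (X ω) ∂μ := ofReal_integral_le_lintegral_ofReal hX
    _ ≤ ENNReal.ofReal b ^ q * (ENNReal.ofReal C * ∫⁻ ω, ENNReal.ofReal (Y ω) ∂ν) ^ p :=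
        lintegral_ofReal_le_of_meas_le hX.aemeasurable hXb hY.aemeasurable hp hq hpq htail'
    _ = ENNReal.ofReal (b ^ q * (C * ∫ ω, Y ω ∂ν) ^ p) := by
        rw [← ofReal_integral_eq_lintegral_ofReal hY hY0, ← ofReal_mul hC,
          ofReal_rpow_of_nonneg hb hq, ofReal_rpow_of_nonneg (by positivity) hp,
          ← ofReal_mul (by positivity)]

end TailComparison

theorem rdp_expected_outcomes_upper
    (b ε α : ℝ) (hb : 0 < b) (hε : 0 ≤ ε) (hα : 1 < α)
    (μ ν : Measure ℝ) [IsProbabilityMeasure μ] [IsProbabilityMeasure ν]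
    (hμsupp : μ (Set.Icc 0 b) = 1) (hνsupp : ν (Set.Icc 0 b) = 1)
    (hRDP : ∀ S : Set ℝ, MeasurableSet S →
      (μ S).toReal ≤ (Real.exp ε * (ν S).toReal) ^ ((α - 1) / α)) :
    ∫ x, x ∂μ ≤ b ^ (1 / α) * (Real.exp ε * ∫ x, x ∂ν) ^ ((α - 1) / α) := by
  have hα₀ : 0 < α := one_pos.trans hα
  have hμ : ∀ᵐ x ∂μ, x ∈ Icc 0 b := (mem_ae_iff_prob_eq_one measurableSet_Icc).2 hμsupp
  have hν : ∀ᵐ x ∂ν, x ∈ Icc 0 b := (mem_ae_iff_prob_eq_one measurableSet_Icc).2 hνsupp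
  exact rdp_expected_outcomes_upper_general hb.le (Real.exp_nonneg ε)
    (div_nonneg (sub_nonneg.2 hα.le) hα₀.le) (one_div_nonneg.2 hα₀.le) (by field_simp; ring)
    (.of_mem_Icc 0 b aemeasurable_id hμ) (hμ.mono fun _ hx ↦ hx.2)
    (.of_mem_Icc 0 b aemeasurable_id hν) (hν.mono fun _ hx ↦ hx.1)
    fun t _ ↦ hRDP (Ici t) measurableSet_Ici
end

section
/- Let b > 0, ε ≥ 0, α > 1, and let μ and ν be Borel probability measures on ℝ, both supported on the interval [0, b]. If ν satisfies the (ε, α)-RDP outcomes guarantee relative to μ, then ∫ x dμ(x) ≥ e^{−ε} · (b^{−1/α} · ∫ x dν(x))^{α/(α−1)}. -/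
open MeasureTheory

/-!
Let `X ≥ 0` and `0 ≤ Y ≤ b`, both the identity when `μ` and `ν` live on `ℝ`, and put
`p = (α - 1) / α`. The layer-cake formula and the guarantee for the upper level sets give
`∫ Y ∂ν = ∫₀ᵇ ν {t ≤ Y} dt ≤ ∫₀ᵇ (e^ε μ {t ≤ X}) ^ p dt`. Hölder's inequality on `(0, b]` bounds the
right-hand side by `(e^ε ∫₀ᵇ μ {t ≤ X} dt) ^ p * b ^ (1 - p)`, and the layer-cake formula for `X`
bounds this in turn by `(e^ε ∫ X ∂μ) ^ p * b ^ (1 - p)`. Solving for `∫ X ∂μ` gives the claim.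
-/

open Set
open scoped ENNReal

section TailComparison

variable {Ω Ω' : Type*} {mΩ : MeasurableSpace Ω} {mΩ' : MeasurableSpace Ω'}
  {μ : Measure Ω} {ν : Measure Ω'}

lemma lintegral_rpow_le_rpow_lintegral_mul_measure_univ {f : Ω → ℝ≥0∞} (hf : AEMeasurable f μ)
    {p : ℝ} (hp₀ : 0 ≤ p) (hp₁ : p ≤ 1) :
    ∫⁻ ω, f ω ^ p ∂μ ≤ (∫⁻ ω, f ω ∂μ) ^ p * μ univ ^ (1 - p) := by
  simpa using ENNReal.lintegral_mul_norm_pow_le hf (aemeasurable_const (b := (1 : ℝ≥0∞)))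
    hp₀ (sub_nonneg.2 hp₁) (add_sub_cancel p 1)

lemma setLIntegral_Ioc_meas_le_le_lintegral {X : Ω → ℝ} (hX₀ : 0 ≤ᵐ[μ] X)
    (hX : AEMeasurable X μ) (b : ℝ) :
    ∫⁻ t in Ioc 0 b, μ {ω | t ≤ X ω} ≤ ∫⁻ ω, ENNReal.ofReal (X ω) ∂μ := by
  rw [lintegral_eq_lintegral_meas_le μ hX₀ hX]
  exact lintegral_mono_set Ioc_subset_Ioi_self

lemma lintegral_eq_setLIntegral_Ioc_meas_le {Y : Ω → ℝ} {b : ℝ} (hY : AEMeasurable Y μ)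
    (hYb : ∀ᵐ ω ∂μ, Y ω ∈ Icc 0 b) :
    ∫⁻ ω, ENNReal.ofReal (Y ω) ∂μ = ∫⁻ t in Ioc 0 b, μ {ω | t ≤ Y ω} := by
  rw [lintegral_eq_lintegral_meas_le μ (hYb.mono fun _ h ↦ h.1) hY]
  have htail : ∫⁻ t in Ioi 0 \ Iic b, μ {ω | t ≤ Y ω} = 0 := by
    refine setLIntegral_eq_zero (measurableSet_Ioi.diff measurableSet_Iic) fun t ht ↦ ?_
    have hbt : b < t := not_le.1 ht.2
    exact measure_eq_zero_iff_ae_notMem.2 (hYb.mono fun _ h ↦ not_le.2 (h.2.trans_lt hbt))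
  rw [← lintegral_inter_add_sdiff _ (Ioi 0) measurableSet_Iic, htail, add_zero, Ioi_inter_Iic]

lemma lintegral_le_of_meas_le_rpow {X : Ω → ℝ} {Y : Ω' → ℝ} {b p : ℝ} {c : ℝ≥0∞}
    (hp₀ : 0 ≤ p) (hp₁ : p ≤ 1) (hX₀ : 0 ≤ᵐ[μ] X) (hX : AEMeasurable X μ)
    (hY : AEMeasurable Y ν) (hYb : ∀ᵐ ω ∂ν, Y ω ∈ Icc 0 b)
    (htail : ∀ t ∈ Ioc 0 b, ν {ω | t ≤ Y ω} ≤ (c * μ {ω | t ≤ X ω}) ^ p) :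
    ∫⁻ ω, ENNReal.ofReal (Y ω) ∂ν ≤
      (c * ∫⁻ ω, ENNReal.ofReal (X ω) ∂μ) ^ p * ENNReal.ofReal b ^ (1 - p) := by
  have hmeas : Measurable fun t : ℝ ↦ μ {ω | t ≤ X ω} :=
    Antitone.measurable fun _ _ hst ↦ measure_mono fun _ h ↦ hst.trans h
  calc ∫⁻ ω, ENNReal.ofReal (Y ω) ∂ν
      = ∫⁻ t in Ioc 0 b, ν {ω | t ≤ Y ω} := lintegral_eq_setLIntegral_Ioc_meas_le hY hYb
    _ ≤ ∫⁻ t in Ioc 0 b, (c * μ {ω | t ≤ X ω}) ^ p := setLIntegral_mono' measurableSet_Ioc htail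
    _ ≤ (∫⁻ t in Ioc 0 b, c * μ {ω | t ≤ X ω}) ^ p * ENNReal.ofReal b ^ (1 - p) := by
      simpa using lintegral_rpow_le_rpow_lintegral_mul_measure_univ
        (μ := volume.restrict (Ioc 0 b)) (hmeas.const_mul c).aemeasurable hp₀ hp₁
    _ = (c * ∫⁻ t in Ioc 0 b, μ {ω | t ≤ X ω}) ^ p * ENNReal.ofReal b ^ (1 - p) := by
      rw [lintegral_const_mul c hmeas]
    _ ≤ (c * ∫⁻ ω, ENNReal.ofReal (X ω) ∂μ) ^ p * ENNReal.ofReal b ^ (1 - p) := by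
      gcongr
      exact setLIntegral_Ioc_meas_le_le_lintegral hX₀ hX b

lemma integral_le_of_measureReal_le_rpow [IsFiniteMeasure ν] {X : Ω → ℝ} {Y : Ω' → ℝ}
    {b c p : ℝ} (hb : 0 ≤ b) (hc : 0 ≤ c) (hp₀ : 0 ≤ p) (hp₁ : p ≤ 1)
    (hX₀ : 0 ≤ᵐ[μ] X) (hX : Integrable X μ)
    (hY : AEMeasurable Y ν) (hYb : ∀ᵐ ω ∂ν, Y ω ∈ Icc 0 b)
    (htail : ∀ t ∈ Ioc 0 b, ν.real {ω | t ≤ Y ω} ≤ (c * μ.real {ω | t ≤ X ω}) ^ p) :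
    ∫ ω, Y ω ∂ν ≤ (c * ∫ ω, X ω ∂μ) ^ p * b ^ (1 - p) := by
  have hEX : 0 ≤ ∫ ω, X ω ∂μ := integral_nonneg_of_ae hX₀
  have htail' : ∀ t ∈ Ioc 0 b,
      ν {ω | t ≤ Y ω} ≤ (ENNReal.ofReal c * μ {ω | t ≤ X ω}) ^ p := fun t ht ↦ by
    rw [← ofReal_measureReal (μ := ν), ← ofReal_measureReal (hX.measure_ge_lt_top ht.1).ne,
      ← ENNReal.ofReal_mul hc, ENNReal.ofReal_rpow_of_nonneg (by positivity) hp₀]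
    exact ENNReal.ofReal_le_ofReal (htail t ht)
  have hle := lintegral_le_of_meas_le_rpow hp₀ hp₁ hX₀ hX.aemeasurable hY hYb htail'
  rwa [← ofReal_integral_eq_lintegral_ofReal (.of_mem_Icc 0 b hY hYb) (hYb.mono fun _ h ↦ h.1),
    ← ofReal_integral_eq_lintegral_ofReal hX hX₀, ← ENNReal.ofReal_mul hc,
    ENNReal.ofReal_rpow_of_nonneg (by positivity) hp₀,
    ENNReal.ofReal_rpow_of_nonneg hb (sub_nonneg.2 hp₁), ← ENNReal.ofReal_mul (by positivity),
    ENNReal.ofReal_le_ofReal_iff (by positivity)] at hle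

theorem rdp_expected_outcomes_lower_general [IsFiniteMeasure ν] {X : Ω → ℝ} {Y : Ω' → ℝ}
    {b ε α : ℝ} (hb : 0 < b) (hα : 1 < α) (hX₀ : 0 ≤ᵐ[μ] X) (hX : Integrable X μ)
    (hY : AEMeasurable Y ν) (hYb : ∀ᵐ ω ∂ν, Y ω ∈ Icc 0 b)
    (htail : ∀ t ∈ Ioc 0 b,
      ν.real {ω | t ≤ Y ω} ≤ (Real.exp ε * μ.real {ω | t ≤ X ω}) ^ ((α - 1) / α)) :
    Real.exp (-ε) * (b ^ (-1 / α) * ∫ ω, Y ω ∂ν) ^ (α / (α - 1)) ≤ ∫ ω, X ω ∂μ := by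
  have hα₀ : 0 < α := by linarith
  have hp₀ : 0 < (α - 1) / α := div_pos (by linarith) hα₀
  have hp₁ : (α - 1) / α ≤ 1 := (div_le_one hα₀).2 (by linarith)
  have hexponent : -1 / α = -(1 - (α - 1) / α) := by field_simp; ring
  have hEX : 0 ≤ ∫ ω, X ω ∂μ := integral_nonneg_of_ae hX₀
  have hEY : 0 ≤ ∫ ω, Y ω ∂ν := integral_nonneg_of_ae (hYb.mono fun _ h ↦ h.1)
  have hmean : b ^ (-1 / α) * ∫ ω, Y ω ∂ν ≤ (Real.exp ε * ∫ ω, X ω ∂μ) ^ ((α - 1) / α) := by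
    rw [hexponent, Real.rpow_neg hb.le, inv_mul_le_iff₀' (by positivity)]
    exact integral_le_of_measureReal_le_rpow hb.le (Real.exp_pos ε).le hp₀.le hp₁ hX₀ hX hY hYb
      htail
  rw [Real.exp_neg, inv_mul_le_iff₀ (Real.exp_pos ε), ← inv_div (α - 1) α]
  exact (Real.rpow_inv_le_iff_of_pos (by positivity) (by positivity) hp₀).2 hmean

end TailComparison

theorem rdp_expected_outcomes_lower
    (b ε α : ℝ) (hb : 0 < b) (hε : 0 ≤ ε) (hα : 1 < α)
    (μ ν : Measure ℝ) [IsProbabilityMeasure μ] [IsProbabilityMeasure ν]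
    (hμsupp : μ (Set.Icc 0 b) = 1) (hνsupp : ν (Set.Icc 0 b) = 1)
    (hRDP : ∀ S : Set ℝ, MeasurableSet S →
      (ν S).toReal ≤ (Real.exp ε * (μ S).toReal) ^ ((α - 1) / α)) :
    ∫ x, x ∂μ ≥ Real.exp (-ε) * (b ^ (-1 / α) * ∫ x, x ∂ν) ^ (α / (α - 1)) := by
  have hμ : ∀ᵐ x ∂μ, x ∈ Icc 0 b := (mem_ae_iff_prob_eq_one measurableSet_Icc).2 hμsupp
  have hν : ∀ᵐ x ∂ν, x ∈ Icc 0 b := (mem_ae_iff_prob_eq_one measurableSet_Icc).2 hνsupp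
  exact rdp_expected_outcomes_lower_general hb hα (hμ.mono fun _ h ↦ h.1)
    (.of_mem_Icc 0 b aemeasurable_id hμ) aemeasurable_id hν fun _ _ ↦ hRDP _ measurableSet_Ici
end

section
/- Let Ω be a measurable space, let μ and ν be probability measures on Ω, let b > 0, ε ≥ 0, δ ≥ 0, and let f : Ω → ℝ be a measurable function with 0 ≤ f(ω) ≤ b for all ω ∈ Ω. If ν satisfies the (ε, δ)-ADP outcomes guarantee relative to μ (i.e., ν(S) ≤ e^ε · μ(S) + δ for every measurable S ⊆ Ω), then ∫ f dμ ≥ e^{−ε} · ((∫ f dν) − b·δ). (Policy-level robustness for ADP: the expected cumulative reward of a policy trained on a poisoned dataset is lower-bounded by e^{−ε}(J(π) − bδ), where J(π) is the expected cumulative reward of the clean policy.) -/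
open MeasureTheory

/-!
Take the Jordan decomposition of `ν - e^ε μ`. The guarantee, applied to a set that carries the
positive part and is null for the negative part, bounds the mass of the positive part by `δ`.
Integrating a reward with values in `[0, b]`, the positive part therefore contributes at most `b δ`,
and the negative part can be dropped, so `∫ f dν ≤ e^ε ∫ f dμ + b δ`.
-/

section

variable {Ω : Type*} [MeasurableSpace Ω] {μ ν : Measure Ω} [IsFiniteMeasure μ] [IsFiniteMeasure ν]

lemma measure_add_sub_eq_sub_add : ν + (μ - ν) = ν - μ + μ := by
  apply Measure.toSignedMeasure_eq_toSignedMeasure_iff.mp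
  rw [Measure.toSignedMeasure_add, Measure.toSignedMeasure_add, ← sub_eq_sub_iff_add_eq_add]
  exact Measure.sub_toSignedMeasure_eq_toSignedMeasure_sub

lemma measureReal_sub_univ_le {δ : ℝ}
    (h : ∀ S : Set Ω, MeasurableSet S → ν.real S ≤ μ.real S + δ) :
    (ν - μ).real Set.univ ≤ δ := by
  obtain ⟨s, hs, deficit_null, excess_compl_null⟩ :=
    Measure.mutually_singular_measure_sub (μ := μ) (ν := ν)
  have excess_add : (ν - μ).real s + μ.real s = ν.real s := by
    rw [← measureReal_add_apply, ← measure_add_sub_eq_sub_add, measureReal_add_apply,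
      measureReal_def (μ - ν), deficit_null, ENNReal.toReal_zero, add_zero]
  calc (ν - μ).real Set.univ
      = (ν - μ).real s := by
        rw [← measureReal_add_measureReal_compl hs, measureReal_def _ sᶜ, excess_compl_null,
          ENNReal.toReal_zero, add_zero]
    _ = ν.real s - μ.real s := eq_sub_of_add_eq excess_add
    _ ≤ δ := sub_le_iff_le_add'.mpr (h s hs)

lemma integral_le_integral_add_mul_measureReal_sub_univ {f : Ω → ℝ} {b : ℝ}
    (hfμ : Integrable f μ) (hfν : Integrable f ν) (hf0 : 0 ≤ᵐ[μ] f) (hfb : ∀ᵐ ω ∂ν, f ω ≤ b) :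
    ∫ ω, f ω ∂ν ≤ ∫ ω, f ω ∂μ + b * (ν - μ).real Set.univ := by
  have hf_excess : Integrable f (ν - μ) := hfν.mono_measure Measure.sub_le
  have hf_deficit : Integrable f (μ - ν) := hfμ.mono_measure Measure.sub_le
  calc ∫ ω, f ω ∂ν
      ≤ ∫ ω, f ω ∂ν + ∫ ω, f ω ∂(μ - ν) :=
        le_add_of_nonneg_right <|
          integral_nonneg_of_ae (Measure.sub_le.absolutelyContinuous.ae_le hf0)
    _ = ∫ ω, f ω ∂μ + ∫ ω, f ω ∂(ν - μ) := by
        rw [← integral_add_measure hfν hf_deficit, measure_add_sub_eq_sub_add,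
          integral_add_measure hf_excess hfμ, add_comm]
    _ ≤ ∫ ω, f ω ∂μ + ∫ _, b ∂(ν - μ) :=
        add_le_add le_rfl <| integral_mono_ae hf_excess (integrable_const b)
          (Measure.sub_le.absolutelyContinuous.ae_le hfb)
    _ = ∫ ω, f ω ∂μ + b * (ν - μ).real Set.univ := by
        rw [integral_const, smul_eq_mul, mul_comm]

end

/-- The `(ε, δ)`-ADP outcomes guarantee of `ν` relative to `μ`, the laws of the policies trained on
the clean and on the poisoned dataset. `Measure.real` sends infinite mass to `0`, so this is meant
for finite measures. -/
def ADPOutcomesGuarantee {Ω : Type*} [MeasurableSpace Ω] (μ ν : Measure Ω) (ε δ : ℝ) : Prop :=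
  ∀ S : Set Ω, MeasurableSet S → ν.real S ≤ Real.exp ε * μ.real S + δ

section

variable {Ω : Type*} [MeasurableSpace Ω] {μ ν : Measure Ω} [IsFiniteMeasure μ] [IsFiniteMeasure ν]
  {b ε δ : ℝ} {f : Ω → ℝ}

lemma ADPOutcomesGuarantee.measureReal_sub_exp_smul_univ_le (h : ADPOutcomesGuarantee μ ν ε δ) :
    (ν - (Real.exp ε).toNNReal • μ).real Set.univ ≤ δ :=
  measureReal_sub_univ_le fun S hS ↦ by
    rw [measureReal_nnreal_smul_apply, Real.coe_toNNReal _ (Real.exp_pos ε).le]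
    exact h S hS

theorem adp_policy_level_robustness_general (h : ADPOutcomesGuarantee μ ν ε δ) (hb : 0 ≤ b)
    (hfμ : Integrable f μ) (hfν : Integrable f ν) (hf0 : 0 ≤ᵐ[μ] f) (hfb : ∀ᵐ ω ∂ν, f ω ≤ b) :
    Real.exp (-ε) * ((∫ ω, f ω ∂ν) - b * δ) ≤ ∫ ω, f ω ∂μ := by
  rw [Real.exp_neg, inv_mul_le_iff₀ (Real.exp_pos ε), sub_le_iff_le_add]
  let c : NNReal := (Real.exp ε).toNNReal
  calc ∫ ω, f ω ∂ν
      ≤ ∫ ω, f ω ∂(c • μ) + b * (ν - c • μ).real Set.univ :=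
        integral_le_integral_add_mul_measureReal_sub_univ hfμ.smul_measure_nnreal hfν
          (Measure.ae_smul_measure hf0 c) hfb
    _ ≤ ∫ ω, f ω ∂(c • μ) + b * δ := by
        gcongr
        exact h.measureReal_sub_exp_smul_univ_le
    _ = Real.exp ε * ∫ ω, f ω ∂μ + b * δ := by
        rw [integral_smul_nnreal_measure, NNReal.smul_def, smul_eq_mul,
          Real.coe_toNNReal _ (Real.exp_pos ε).le]

end

theorem adp_policy_level_robustness
    {Ω : Type*} [MeasurableSpace Ω]
    (μ ν : Measure Ω) [IsProbabilityMeasure μ] [IsProbabilityMeasure ν]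
    (b ε δ : ℝ) (hb : 0 < b) (hε : 0 ≤ ε) (hδ : 0 ≤ δ)
    (f : Ω → ℝ) (hf : Measurable f)
    (hf0 : ∀ ω, 0 ≤ f ω) (hfb : ∀ ω, f ω ≤ b)
    (hADP : ∀ S : Set Ω, MeasurableSet S →
      (ν S).toReal ≤ Real.exp ε * (μ S).toReal + δ) :
    ∫ ω, f ω ∂μ ≥ Real.exp (-ε) * ((∫ ω, f ω ∂ν) - b * δ) := by
  have integrable (ρ : Measure Ω) [IsFiniteMeasure ρ] : Integrable f ρ :=
    .of_mem_Icc 0 b hf.aemeasurable (ae_of_all ρ fun ω ↦ ⟨hf0 ω, hfb ω⟩)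
  exact adp_policy_level_robustness_general hADP hb.le (integrable μ) (integrable ν)
    (ae_of_all μ hf0) (ae_of_all ν hfb)
end

section
/- Let Ω be a measurable space, let μ and ν be probability measures on Ω, let b > 0, ε ≥ 0, α > 1, and let f : Ω → ℝ be a measurable function with 0 ≤ f(ω) ≤ b for all ω ∈ Ω. If ν satisfies the (ε, α)-RDP outcomes guarantee relative to μ (i.e., ν(S) ≤ (e^ε · μ(S))^{(α−1)/α} for every measurable S ⊆ Ω), then ∫ f dμ ≥ e^{−ε} · (b^{−1/α} · ∫ f dν)^{α/(α−1)}. (Policy-level robustness for RDP.) -/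
open MeasureTheory

/- By the layer-cake formula, `∫ f ∂ν` is the integral over `t ∈ (0, b]` of `ν {t ≤ f}`, which is at
most `(e ^ ε * μ {t ≤ f}) ^ θ` with `θ = (α - 1) / α`. As `x ↦ x ^ θ` is concave, Jensen's
inequality on `(0, b]` moves the power outside the integral at the cost of the factor
`b ^ (1 - θ)`, and the layer-cake formula for `μ` turns what is left into `∫ f ∂μ`. -/

section Jensen

variable {X : Type*} [MeasurableSpace X] {κ : Measure X} [IsFiniteMeasure κ] {g : X → ℝ} {θ : ℝ}

theorem integrable_rpow_const_of_le_one (hg : Integrable g κ) (hg0 : 0 ≤ᵐ[κ] g)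
    (hθ0 : 0 ≤ θ) (hθ1 : θ ≤ 1) : Integrable (fun x ↦ g x ^ θ) κ := by
  have h_norm : Integrable (fun x ↦ ‖g x‖ ^ θ) κ :=
    integrable_norm_rpow_of_le hg.aestronglyMeasurable hθ0 zero_le_one hθ1
      (by simpa only [Real.rpow_one] using hg.norm)
  refine h_norm.congr ?_
  filter_upwards [hg0] with x hx
  rw [Real.norm_of_nonneg hx]

theorem integral_rpow_le_measureReal_univ_rpow_mul (hg : Integrable g κ) (hg0 : 0 ≤ᵐ[κ] g)
    (hθ0 : 0 ≤ θ) (hθ1 : θ ≤ 1) :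
    ∫ x, g x ^ θ ∂κ ≤ κ.real Set.univ ^ (1 - θ) * (∫ x, g x ∂κ) ^ θ := by
  rcases eq_or_ne κ 0 with rfl | hκ
  · simpa using by positivity
  have : NeZero κ := ⟨hκ⟩
  have h_mass : 0 < κ.real Set.univ := measureReal_univ_pos
  have h_jensen : ⨍ x, g x ^ θ ∂κ ≤ (⨍ x, g x ∂κ) ^ θ :=
    (Real.concaveOn_rpow hθ0 hθ1).le_map_average (Real.continuous_rpow_const hθ0).continuousOn
      isClosed_Ici hg0 hg (integrable_rpow_const_of_le_one hg hg0 hθ0 hθ1)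
  calc ∫ x, g x ^ θ ∂κ
      = κ.real Set.univ * ⨍ x, g x ^ θ ∂κ := (measure_smul_average κ _).symm
    _ ≤ κ.real Set.univ * (⨍ x, g x ∂κ) ^ θ := by gcongr
    _ = κ.real Set.univ ^ (1 - θ) * (∫ x, g x ∂κ) ^ θ := by
        rw [average_eq, smul_eq_mul, Real.mul_rpow (by positivity) (integral_nonneg_of_ae hg0),
          Real.inv_rpow h_mass.le, Real.rpow_sub h_mass, Real.rpow_one]
        ring

end Jensen

section Superlevel

variable {Ω : Type*} [MeasurableSpace Ω] {μ ν : Measure Ω} [IsFiniteMeasure μ] [IsFiniteMeasure ν]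
  {f : Ω → ℝ} {b : ℝ}

theorem integrableOn_measureReal_superlevel (f : Ω → ℝ) (s t : ℝ) :
    IntegrableOn (fun r ↦ μ.real {ω | r ≤ f ω}) (Set.Ioc s t) := by
  have h_anti : Antitone fun r ↦ μ.real {ω | r ≤ f ω} :=
    fun _ _ hr ↦ measureReal_mono fun _ hω ↦ hr.trans hω
  exact ((h_anti.antitoneOn _).integrableOn_isCompact isCompact_Icc).mono_set
    Set.Ioc_subset_Icc_self

theorem integral_eq_setIntegral_measureReal_superlevel (hf : AEMeasurable f μ)
    (hfb : ∀ᵐ ω ∂μ, f ω ∈ Set.Icc 0 b) :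
    ∫ ω, f ω ∂μ = ∫ t in Set.Ioc 0 b, μ.real {ω | t ≤ f ω} :=
  (Integrable.of_mem_Icc 0 b hf hfb).integral_eq_integral_Ioc_meas_le
    (hfb.mono fun _ h ↦ h.1) (hfb.mono fun _ h ↦ h.2)

theorem integral_le_of_measureReal_superlevel_le_rpow {c θ : ℝ} (hb : 0 ≤ b) (hc : 0 ≤ c)
    (hθ0 : 0 ≤ θ) (hθ1 : θ ≤ 1) (hfμ : AEMeasurable f μ) (hfν : AEMeasurable f ν)
    (hfbμ : ∀ᵐ ω ∂μ, f ω ∈ Set.Icc 0 b) (hfbν : ∀ᵐ ω ∂ν, f ω ∈ Set.Icc 0 b)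
    (h : ∀ t ∈ Set.Ioc 0 b, ν.real {ω | t ≤ f ω} ≤ (c * μ.real {ω | t ≤ f ω}) ^ θ) :
    ∫ ω, f ω ∂ν ≤ b ^ (1 - θ) * (c * ∫ ω, f ω ∂μ) ^ θ := by
  have h_int : IntegrableOn (fun t ↦ c * μ.real {ω | t ≤ f ω}) (Set.Ioc 0 b) :=
    (integrableOn_measureReal_superlevel f 0 b).const_mul c
  have h_nonneg : ∀ t, 0 ≤ c * μ.real {ω | t ≤ f ω} := fun _ ↦ mul_nonneg hc measureReal_nonneg
  calc ∫ ω, f ω ∂ν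
      = ∫ t in Set.Ioc 0 b, ν.real {ω | t ≤ f ω} :=
        integral_eq_setIntegral_measureReal_superlevel hfν hfbν
    _ ≤ ∫ t in Set.Ioc 0 b, (c * μ.real {ω | t ≤ f ω}) ^ θ :=
        setIntegral_mono_on (integrableOn_measureReal_superlevel f 0 b)
          (integrable_rpow_const_of_le_one h_int (.of_forall h_nonneg) hθ0 hθ1)
          measurableSet_Ioc h
    _ ≤ b ^ (1 - θ) * (∫ t in Set.Ioc 0 b, c * μ.real {ω | t ≤ f ω}) ^ θ := by
        simpa only [measureReal_restrict_apply_univ, Real.volume_real_Ioc_of_le hb, sub_zero] using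
          integral_rpow_le_measureReal_univ_rpow_mul h_int (.of_forall h_nonneg) hθ0 hθ1
    _ = b ^ (1 - θ) * (c * ∫ ω, f ω ∂μ) ^ θ := by
        rw [integral_const_mul, integral_eq_setIntegral_measureReal_superlevel hfμ hfbμ]

theorem rdp_policy_level_robustness_general {ε α : ℝ} (hb : 0 < b) (hα : 1 < α)
    (hfμ : AEMeasurable f μ) (hfν : AEMeasurable f ν)
    (hfbμ : ∀ᵐ ω ∂μ, f ω ∈ Set.Icc 0 b) (hfbν : ∀ᵐ ω ∂ν, f ω ∈ Set.Icc 0 b)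
    (h : ∀ t ∈ Set.Ioc 0 b,
      ν.real {ω | t ≤ f ω} ≤ (Real.exp ε * μ.real {ω | t ≤ f ω}) ^ ((α - 1) / α)) :
    Real.exp (-ε) * (b ^ (-1 / α) * ∫ ω, f ω ∂ν) ^ (α / (α - 1)) ≤ ∫ ω, f ω ∂μ := by
  have hα0 : 0 < α := zero_lt_one.trans hα
  have h_conj : 0 < α / (α - 1) := div_pos hα0 (sub_pos.2 hα)
  have hμ : 0 ≤ ∫ ω, f ω ∂μ := integral_nonneg_of_ae (hfbμ.mono fun _ h ↦ h.1)
  have hν : 0 ≤ ∫ ω, f ω ∂ν := integral_nonneg_of_ae (hfbν.mono fun _ h ↦ h.1)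
  have h_exponent : 1 - (α - 1) / α = 1 / α := by
    rw [sub_div, div_self hα0.ne', sub_sub_cancel]
  have h_upper : ∫ ω, f ω ∂ν ≤ b ^ (1 / α) * (Real.exp ε * ∫ ω, f ω ∂μ) ^ ((α - 1) / α) := by
    rw [← h_exponent]
    exact integral_le_of_measureReal_superlevel_le_rpow hb.le (Real.exp_nonneg ε)
      (div_nonneg (sub_nonneg.2 hα.le) hα0.le) ((div_le_one hα0).2 (sub_le_self α zero_le_one))
      hfμ hfν hfbμ hfbν h
  have h_scaled : b ^ (-1 / α) * ∫ ω, f ω ∂ν ≤ (Real.exp ε * ∫ ω, f ω ∂μ) ^ (α / (α - 1))⁻¹ := by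
    rwa [neg_div, Real.rpow_neg hb.le, inv_mul_le_iff₀ (Real.rpow_pos_of_pos hb _), inv_div]
  rw [Real.exp_neg, inv_mul_le_iff₀ (Real.exp_pos ε)]
  exact (Real.le_rpow_inv_iff_of_pos (by positivity) (by positivity) h_conj).1 h_scaled

end Superlevel

theorem rdp_policy_level_robustness
    {Ω : Type*} [MeasurableSpace Ω]
    (μ ν : Measure Ω) [IsProbabilityMeasure μ] [IsProbabilityMeasure ν]
    (b ε α : ℝ) (hb : 0 < b) (hε : 0 ≤ ε) (hα : 1 < α)
    (f : Ω → ℝ) (hf : Measurable f)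
    (hf0 : ∀ ω, 0 ≤ f ω) (hfb : ∀ ω, f ω ≤ b)
    (hRDP : ∀ S : Set Ω, MeasurableSet S →
      (ν S).toReal ≤ (Real.exp ε * (μ S).toReal) ^ ((α - 1) / α)) :
    ∫ ω, f ω ∂μ ≥ Real.exp (-ε) * (b ^ (-1 / α) * ∫ ω, f ω ∂ν) ^ (α / (α - 1)) :=
  rdp_policy_level_robustness_general hb hα hf.aemeasurable hf.aemeasurable
    (.of_forall fun ω ↦ ⟨hf0 ω, hfb ω⟩) (.of_forall fun ω ↦ ⟨hf0 ω, hfb ω⟩)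
    fun _ _ ↦ hRDP _ (measurableSet_le measurable_const hf)
end

section
/- Let a < 0 < b be real numbers, ε ≥ 0, δ ≥ 0, and let μ and ν be Borel probability measures on ℝ, both supported on the interval [a, b]. Suppose both μ(S) ≤ e^ε · ν(S) + δ and ν(S) ≤ e^ε · μ(S) + δ hold for every Borel set S ⊆ ℝ. Write E_ν⁺ = ∫ max(x, 0) dν(x) and E_ν⁻ = ∫ max(−x, 0) dν(x). Then ∫ x dμ(x) ≤ e^ε · E_ν⁺ + b·δ − e^{−ε} · (E_ν⁻ + a·δ). (Real-valued expected outcomes guarantee, ADP upper bound.) -/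
open MeasureTheory

/-!
Split `x = max x 0 - max (-x) 0`. For `t > 0` the event `t ≤ max x 0` is the upper tail `t ≤ x`, so
integrating the privacy bound on tails over `0 < t ≤ b` (layer cake) bounds the positive part under
`μ` by the one under `ν`, at the additive cost `b * δ`. The same bound with `μ` and `ν` exchanged,
applied to `-x`, reads `E_ν⁻ ≤ e^ε E_μ⁻ - a * δ`, and solving it for `E_μ⁻` bounds the negative part
from below.
-/

section LayerCake

variable {Ω : Type*} [MeasurableSpace Ω] {μ ν : Measure Ω} {f : Ω → ℝ} {b C δ : ℝ}

lemma integrableOn_measureReal_ge (hf : Integrable f μ) (hf0 : 0 ≤ᵐ[μ] f) :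
    IntegrableOn (fun t ↦ μ.real {ω | t ≤ f ω}) (Set.Ioi 0) := by
  have tail_antitone : Antitone fun t ↦ μ {ω | t ≤ f ω} :=
    fun _ _ hst ↦ measure_mono fun _ hω ↦ hst.trans hω
  refine integrable_toReal_of_lintegral_ne_top tail_antitone.measurable.aemeasurable ?_
  rw [← lintegral_eq_lintegral_meas_le μ hf0 hf.aemeasurable]
  exact hf.lintegral_lt_top.ne

lemma integral_le_mul_integral_add_of_measureReal_ge_le (hb : 0 ≤ b) (hC : 0 ≤ C)
    (hfμ : Integrable f μ) (hfν : Integrable f ν)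
    (hf0μ : 0 ≤ᵐ[μ] f) (hf0ν : 0 ≤ᵐ[ν] f) (hfb : ∀ᵐ ω ∂μ, f ω ≤ b)
    (h : ∀ t ∈ Set.Ioc 0 b, μ.real {ω | t ≤ f ω} ≤ C * ν.real {ω | t ≤ f ω} + δ) :
    ∫ ω, f ω ∂μ ≤ C * (∫ ω, f ω ∂ν) + b * δ := by
  have Ioc_subset : Set.Ioc 0 b ⊆ Set.Ioi 0 := Set.Ioc_subset_Ioi_self
  have hμ_int := (integrableOn_measureReal_ge hfμ hf0μ).mono_set Ioc_subset
  have hν_int := integrableOn_measureReal_ge hfν hf0ν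
  have hCν_int := (hν_int.mono_set Ioc_subset).const_mul C
  have hδ_int : IntegrableOn (fun _ ↦ δ) (Set.Ioc 0 b) := integrableOn_const measure_Ioc_lt_top.ne
  calc ∫ ω, f ω ∂μ
      = ∫ t in Set.Ioc 0 b, μ.real {ω | t ≤ f ω} := hfμ.integral_eq_integral_Ioc_meas_le hf0μ hfb
    _ ≤ ∫ t in Set.Ioc 0 b, (C * ν.real {ω | t ≤ f ω} + δ) :=
      setIntegral_mono_on hμ_int (hCν_int.add hδ_int) measurableSet_Ioc h
    _ = C * (∫ t in Set.Ioc 0 b, ν.real {ω | t ≤ f ω}) + b * δ := by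
      rw [integral_add hCν_int hδ_int, integral_const_mul, setIntegral_const,
        Real.volume_real_Ioc_of_le hb, sub_zero, smul_eq_mul]
    _ ≤ C * (∫ t in Set.Ioi 0, ν.real {ω | t ≤ f ω}) + b * δ := by
      gcongr ?_ * ?_ + _
      exact setIntegral_mono_set hν_int (.of_forall fun _ ↦ measureReal_nonneg)
        Ioc_subset.eventuallyLE
    _ = C * (∫ ω, f ω ∂ν) + b * δ := by rw [hfν.integral_eq_integral_meas_le hf0ν]

lemma integral_max_zero_le_of_measureReal_ge_le (hb : 0 ≤ b) (hC : 0 ≤ C)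
    (hfμ : Integrable f μ) (hfν : Integrable f ν) (hfb : ∀ᵐ ω ∂μ, f ω ≤ b)
    (h : ∀ t ∈ Set.Ioc 0 b, μ.real {ω | t ≤ f ω} ≤ C * ν.real {ω | t ≤ f ω} + δ) :
    ∫ ω, max (f ω) 0 ∂μ ≤ C * (∫ ω, max (f ω) 0 ∂ν) + b * δ := by
  refine integral_le_mul_integral_add_of_measureReal_ge_le hb hC hfμ.pos_part hfν.pos_part
    (.of_forall fun _ ↦ le_max_right _ _) (.of_forall fun _ ↦ le_max_right _ _)
    (hfb.mono fun _ hω ↦ max_le hω hb) fun t ht ↦ ?_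
  simpa only [le_max_iff, ht.1.not_ge, or_false] using h t ht

lemma integral_eq_integral_max_zero_sub (hf : Integrable f μ) :
    ∫ ω, f ω ∂μ = ∫ ω, max (f ω) 0 ∂μ - ∫ ω, max (-f ω) 0 ∂μ := by
  simp only [integral_eq_integral_pos_part_sub_integral_neg_part hf, Real.coe_toNNReal']

end LayerCake

theorem adp_real_valued_expected_outcomes_upper_general
    {Ω : Type*} [MeasurableSpace Ω] {μ ν : Measure Ω} {X : Ω → ℝ} {a b ε δ : ℝ}
    (ha : a ≤ 0) (hb : 0 ≤ b) (hXμ : Integrable X μ) (hXν : Integrable X ν)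
    (hXb : ∀ᵐ ω ∂μ, X ω ≤ b) (haX : ∀ᵐ ω ∂ν, a ≤ X ω)
    (h_upper : ∀ t ∈ Set.Ioc 0 b,
      μ.real {ω | t ≤ X ω} ≤ Real.exp ε * ν.real {ω | t ≤ X ω} + δ)
    (h_lower : ∀ t ∈ Set.Ico a 0,
      ν.real {ω | X ω ≤ t} ≤ Real.exp ε * μ.real {ω | X ω ≤ t} + δ) :
    ∫ ω, X ω ∂μ ≤
      Real.exp ε * (∫ ω, max (X ω) 0 ∂ν) + b * δ
        - Real.exp (-ε) * ((∫ ω, max (-X ω) 0 ∂ν) + a * δ) := by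
  have pos_le : ∫ ω, max (X ω) 0 ∂μ ≤ Real.exp ε * (∫ ω, max (X ω) 0 ∂ν) + b * δ :=
    integral_max_zero_le_of_measureReal_ge_le hb (Real.exp_nonneg ε) hXμ hXν hXb h_upper
  have neg_le : ∫ ω, max (-X ω) 0 ∂ν ≤ Real.exp ε * (∫ ω, max (-X ω) 0 ∂μ) + -a * δ := by
    refine integral_max_zero_le_of_measureReal_ge_le (neg_nonneg.mpr ha) (Real.exp_nonneg ε)
      hXν.neg hXμ.neg (haX.mono fun _ hω ↦ neg_le_neg hω) fun t ht ↦ ?_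
    simpa only [Pi.neg_apply, le_neg] using h_lower (-t) ⟨le_neg.mp ht.2, neg_lt_zero.mpr ht.1⟩
  have le_neg_part :
      Real.exp (-ε) * ((∫ ω, max (-X ω) 0 ∂ν) + a * δ) ≤ ∫ ω, max (-X ω) 0 ∂μ := by
    rw [Real.exp_neg, inv_mul_le_iff₀ (Real.exp_pos ε)]
    linarith
  rw [integral_eq_integral_max_zero_sub hXμ]
  exact sub_le_sub pos_le le_neg_part

theorem adp_real_valued_expected_outcomes_upper
    (a b ε δ : ℝ) (ha : a < 0) (hb : 0 < b) (hε : 0 ≤ ε) (hδ : 0 ≤ δ)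
    (μ ν : Measure ℝ) [IsProbabilityMeasure μ] [IsProbabilityMeasure ν]
    (hμsupp : μ (Set.Icc a b) = 1) (hνsupp : ν (Set.Icc a b) = 1)
    (h₁ : ∀ S : Set ℝ, MeasurableSet S →
      (μ S).toReal ≤ Real.exp ε * (ν S).toReal + δ)
    (h₂ : ∀ S : Set ℝ, MeasurableSet S →
      (ν S).toReal ≤ Real.exp ε * (μ S).toReal + δ) :
    ∫ x, x ∂μ ≤
      Real.exp ε * (∫ x, max x 0 ∂ν) + b * δ
        - Real.exp (-ε) * ((∫ x, max (-x) 0 ∂ν) + a * δ) := by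
  have hμ : ∀ᵐ x ∂μ, x ∈ Set.Icc a b := (mem_ae_iff_prob_eq_one measurableSet_Icc).2 hμsupp
  have hν : ∀ᵐ x ∂ν, x ∈ Set.Icc a b := (mem_ae_iff_prob_eq_one measurableSet_Icc).2 hνsupp
  exact adp_real_valued_expected_outcomes_upper_general ha.le hb.le
    (.of_mem_Icc a b aemeasurable_id hμ) (.of_mem_Icc a b aemeasurable_id hν)
    (hμ.mono fun _ hx ↦ hx.2) (hν.mono fun _ hx ↦ hx.1)
    (fun _ _ ↦ h₁ _ measurableSet_Ici) (fun _ _ ↦ h₂ _ measurableSet_Iic)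
end

section
/- Let a < 0 < b be real numbers, ε ≥ 0, α > 1, and let μ and ν be Borel probability measures on ℝ, both supported on the interval [a, b]. Suppose both μ(S) ≤ (e^ε · ν(S))^{(α−1)/α} and ν(S) ≤ (e^ε · μ(S))^{(α−1)/α} hold for every Borel set S ⊆ ℝ. Write E_ν⁺ = ∫ max(x, 0) dν(x) and E_ν⁻ = ∫ max(−x, 0) dν(x). Then ∫ x dμ(x) ≥ e^{−ε} · (b^{−1/α} · E_ν⁺)^{α/(α−1)} − (−a)^{1/α} · (e^ε · E_ν⁻)^{(α−1)/α}. (Real-valued expected outcomes guarantee, RDP lower bound.) -/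
open MeasureTheory

/-!
The layer-cake formula writes the integral of a function with values in `[0, M]` as
`∫ t in (0, M], μ {f ≥ t}`. If `μ S ≤ φ (ν S)` for a concave `φ`, Jensen's inequality on `(0, M]`
moves `φ` outside the integral and gives `∫ f ∂μ ≤ M φ (M⁻¹ ∫ f ∂ν)`. For the Rényi bound,
`φ x = (e ^ ε x) ^ ((α - 1) / α)`. The lower bound on the mean under `μ` follows by applying this
to the negative part from `ν` to `μ`, and to the positive part from `μ` to `ν`, where the resulting
inequality is solved for the integral under `μ`.
-/

open Set

section Transfer

lemma integrableOn_Ioc_comp_of_antitone {φ g : ℝ → ℝ} (hφ : ContinuousOn φ (Ici 0))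
    (hg : Antitone g) (hg0 : ∀ t, 0 ≤ g t) (a b : ℝ) :
    IntegrableOn (fun t => φ (g t)) (Ioc a b) := by
  have hmeas : Measurable fun t => φ (g t) := by
    have hφmax : Continuous fun x => φ (max x 0) :=
      hφ.comp_continuous (by fun_prop) fun _ => mem_Ici.2 (le_max_right _ _)
    simpa only [Function.comp_def, max_eq_left (hg0 _)] using
      hφmax.measurable.comp hg.measurable
  obtain ⟨C, hC⟩ := isCompact_Icc.exists_bound_of_continuousOn
    (hφ.mono (Icc_subset_Ici_self.trans (Ici_subset_Ici.2 (hg0 b))) :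
      ContinuousOn φ (Icc (g b) (g a)))
  refine Measure.integrableOn_of_bounded measure_Ioc_lt_top.ne hmeas.aestronglyMeasurable
    (M := C) ?_
  filter_upwards [ae_restrict_mem measurableSet_Ioc] with t ht
  exact hC _ ⟨hg ht.2, hg ht.1.le⟩

variable {Ω : Type*} [MeasurableSpace Ω] {μ ν : Measure Ω} [IsFiniteMeasure μ] [IsFiniteMeasure ν]
  {f : Ω → ℝ} {M : ℝ}

variable (μ f) in
lemma antitone_measureReal_superlevel : Antitone fun t => μ.real {ω | t ≤ f ω} :=
  fun _ _ hst => measureReal_mono fun _ hω => hst.trans hω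

lemma integral_eq_integral_Ioc_measureReal_superlevel (hf : Measurable f)
    (hfμ : ∀ᵐ ω ∂μ, f ω ∈ Icc 0 M) :
    ∫ ω, f ω ∂μ = ∫ t in Ioc 0 M, μ.real {ω | t ≤ f ω} :=
  (Integrable.of_mem_Icc 0 M hf.aemeasurable hfμ).integral_eq_integral_Ioc_meas_le
    (hfμ.mono fun _ h => h.1) (hfμ.mono fun _ h => h.2)

theorem integral_le_of_measureReal_le_concave {φ : ℝ → ℝ} (hφ : ConcaveOn ℝ (Ici 0) φ)
    (hφc : ContinuousOn φ (Ici 0)) (hM : 0 < M) (hf : Measurable f)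
    (hfμ : ∀ᵐ ω ∂μ, f ω ∈ Icc 0 M) (hfν : ∀ᵐ ω ∂ν, f ω ∈ Icc 0 M)
    (h : ∀ S, MeasurableSet S → μ.real S ≤ φ (ν.real S)) :
    ∫ ω, f ω ∂μ ≤ M * φ (M⁻¹ * ∫ ω, f ω ∂ν) := by
  have integrable_level (ρ : Measure Ω) [IsFiniteMeasure ρ] :
      IntegrableOn (fun t => ρ.real {ω | t ≤ f ω}) (Ioc 0 M) :=
    integrableOn_Ioc_comp_of_antitone continuousOn_id (antitone_measureReal_superlevel ρ f)
      (fun _ => measureReal_nonneg) 0 M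
  have integrable_φ_level : IntegrableOn (fun t => φ (ν.real {ω | t ≤ f ω})) (Ioc 0 M) :=
    integrableOn_Ioc_comp_of_antitone hφc (antitone_measureReal_superlevel ν f)
      (fun _ => measureReal_nonneg) 0 M
  have jensen := hφ.le_map_set_average hφc isClosed_Ici (by simp [hM]) measure_Ioc_lt_top.ne
    (Filter.Eventually.of_forall fun _ => measureReal_nonneg)
    (integrable_level ν) integrable_φ_level
  simp only [setAverage_eq, Real.volume_real_Ioc_of_le hM.le, sub_zero, smul_eq_mul,
    ← integral_eq_integral_Ioc_measureReal_superlevel hf hfν] at jensen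
  calc ∫ ω, f ω ∂μ
      = ∫ t in Ioc 0 M, μ.real {ω | t ≤ f ω} :=
        integral_eq_integral_Ioc_measureReal_superlevel hf hfμ
    _ ≤ ∫ t in Ioc 0 M, φ (ν.real {ω | t ≤ f ω}) :=
        integral_mono (integrable_level μ) integrable_φ_level
          fun _ => h _ (measurableSet_le measurable_const hf)
    _ ≤ M * φ (M⁻¹ * ∫ ω, f ω ∂ν) := (inv_mul_le_iff₀ hM).1 jensen

theorem integral_le_of_measureReal_le_rpow_s14 {c p : ℝ} (hc : 0 ≤ c) (hp0 : 0 ≤ p) (hp1 : p ≤ 1)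
    (hM : 0 < M) (hf : Measurable f)
    (hfμ : ∀ᵐ ω ∂μ, f ω ∈ Icc 0 M) (hfν : ∀ᵐ ω ∂ν, f ω ∈ Icc 0 M)
    (h : ∀ S, MeasurableSet S → μ.real S ≤ (c * ν.real S) ^ p) :
    ∫ ω, f ω ∂μ ≤ M ^ (1 - p) * (c * ∫ ω, f ω ∂ν) ^ p := by
  have integral_nonneg_ν : 0 ≤ ∫ ω, f ω ∂ν := integral_nonneg_of_ae (hfν.mono fun _ h => h.1)
  have hconcave : ConcaveOn ℝ (Ici 0) fun x : ℝ => c ^ p * x ^ p :=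
    (Real.concaveOn_rpow hp0 hp1).smul (Real.rpow_nonneg hc p)
  have hcont : Continuous fun x : ℝ => c ^ p * x ^ p :=
    continuous_const.mul (Real.continuous_rpow_const hp0)
  calc ∫ ω, f ω ∂μ
      ≤ M * (c ^ p * (M⁻¹ * ∫ ω, f ω ∂ν) ^ p) :=
        integral_le_of_measureReal_le_concave hconcave hcont.continuousOn hM hf hfμ hfν
          fun S hS => (h S hS).trans_eq (Real.mul_rpow hc measureReal_nonneg)
    _ = M ^ (1 - p) * (c * ∫ ω, f ω ∂ν) ^ p := by
        rw [Real.mul_rpow (inv_nonneg.2 hM.le) integral_nonneg_ν, Real.inv_rpow hM.le,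
          Real.mul_rpow hc integral_nonneg_ν, Real.rpow_sub hM, Real.rpow_one]
        ring

end Transfer

/-- The one-sided `(ε, α)`-RDP outcomes guarantee of `μ` relative to `ν`: the bound on event
probabilities implied by a Rényi divergence of order `α` at most `ε`. The two-sided guarantee is
this property for both `(μ, ν)` and `(ν, μ)`. -/
def RDPOutcomesGuarantee {Ω : Type*} [MeasurableSpace Ω] (ε α : ℝ) (μ ν : Measure Ω) : Prop :=
  ∀ S, MeasurableSet S → μ.real S ≤ (Real.exp ε * ν.real S) ^ ((α - 1) / α)

namespace RDPOutcomesGuarantee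

variable {Ω : Type*} [MeasurableSpace Ω] {μ ν : Measure Ω} [IsFiniteMeasure μ] [IsFiniteMeasure ν]
  {ε α M : ℝ} {f : Ω → ℝ}

theorem integral_le (h : RDPOutcomesGuarantee ε α μ ν) (hα : 1 ≤ α) (hM : 0 < M)
    (hf : Measurable f) (hfμ : ∀ᵐ ω ∂μ, f ω ∈ Icc 0 M) (hfν : ∀ᵐ ω ∂ν, f ω ∈ Icc 0 M) :
    ∫ ω, f ω ∂μ ≤ M ^ (1 / α) * (Real.exp ε * ∫ ω, f ω ∂ν) ^ ((α - 1) / α) := by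
  have hα0 : 0 < α := by linarith
  have exponent_eq : 1 - (α - 1) / α = 1 / α := by field_simp; ring
  rw [← exponent_eq]
  exact integral_le_of_measureReal_le_rpow_s14 (Real.exp_nonneg ε)
    (div_nonneg (sub_nonneg.2 hα) hα0.le) ((div_le_one hα0).2 (by linarith)) hM hf hfμ hfν h

theorem le_integral (h : RDPOutcomesGuarantee ε α ν μ) (hα : 1 < α) (hM : 0 < M)
    (hf : Measurable f) (hfμ : ∀ᵐ ω ∂μ, f ω ∈ Icc 0 M) (hfν : ∀ᵐ ω ∂ν, f ω ∈ Icc 0 M) :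
    Real.exp (-ε) * (M ^ (-1 / α) * ∫ ω, f ω ∂ν) ^ (α / (α - 1)) ≤ ∫ ω, f ω ∂μ := by
  have integral_nonneg_μ : 0 ≤ ∫ ω, f ω ∂μ := integral_nonneg_of_ae (hfμ.mono fun _ h => h.1)
  have integral_nonneg_ν : 0 ≤ ∫ ω, f ω ∂ν := integral_nonneg_of_ae (hfν.mono fun _ h => h.1)
  have exponent_pos : 0 < (α - 1) / α := div_pos (by linarith) (by linarith)
  have scaled_le :
      M ^ (-1 / α) * ∫ ω, f ω ∂ν ≤ (Real.exp ε * ∫ ω, f ω ∂μ) ^ ((α - 1) / α) := by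
    rw [neg_div, Real.rpow_neg hM.le, inv_mul_le_iff₀ (by positivity)]
    exact h.integral_le hα.le hM hf hfν hfμ
  rw [Real.exp_neg, inv_mul_le_iff₀ (Real.exp_pos ε), ← inv_div (α - 1) α]
  exact (Real.rpow_inv_le_iff_of_pos (by positivity) (by positivity) exponent_pos).2 scaled_le

end RDPOutcomesGuarantee

lemma integral_eq_integral_max_sub_integral_max_neg {Ω : Type*} [MeasurableSpace Ω]
    {μ : Measure Ω} {X : Ω → ℝ} (hX : Integrable X μ) :
    ∫ ω, X ω ∂μ = ∫ ω, max (X ω) 0 ∂μ - ∫ ω, max (-X ω) 0 ∂μ := by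
  simpa only [Real.coe_toNNReal'] using integral_eq_integral_pos_part_sub_integral_neg_part hX

theorem rdp_real_valued_expected_outcomes_lower_general
    {Ω : Type*} [MeasurableSpace Ω] {μ ν : Measure Ω} [IsFiniteMeasure μ] [IsFiniteMeasure ν]
    {a b ε α : ℝ} (ha : a < 0) (hb : 0 < b) (hα : 1 < α) {X : Ω → ℝ} (hX : Measurable X)
    (hXμ : ∀ᵐ ω ∂μ, X ω ∈ Icc a b) (hXν : ∀ᵐ ω ∂ν, X ω ∈ Icc a b)
    (hμν : RDPOutcomesGuarantee ε α μ ν) (hνμ : RDPOutcomesGuarantee ε α ν μ) :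
    Real.exp (-ε) * (b ^ (-1 / α) * ∫ ω, max (X ω) 0 ∂ν) ^ (α / (α - 1))
        - (-a) ^ (1 / α) * (Real.exp ε * ∫ ω, max (-X ω) 0 ∂ν) ^ ((α - 1) / α)
      ≤ ∫ ω, X ω ∂μ := by
  have posPart_mem {x : ℝ} (hx : x ∈ Icc a b) : max x 0 ∈ Icc 0 b :=
    ⟨le_max_right _ _, max_le hx.2 hb.le⟩
  have negPart_mem {x : ℝ} (hx : x ∈ Icc a b) : max (-x) 0 ∈ Icc 0 (-a) :=
    ⟨le_max_right _ _, max_le (neg_le_neg hx.1) (neg_nonneg.2 ha.le)⟩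
  rw [integral_eq_integral_max_sub_integral_max_neg (.of_mem_Icc a b hX.aemeasurable hXμ)]
  exact sub_le_sub
    (hνμ.le_integral hα hb (hX.max measurable_const)
      (hXμ.mono fun _ => posPart_mem) (hXν.mono fun _ => posPart_mem))
    (hμν.integral_le hα.le (neg_pos.2 ha) (hX.neg.max measurable_const)
      (hXμ.mono fun _ => negPart_mem) (hXν.mono fun _ => negPart_mem))

theorem rdp_real_valued_expected_outcomes_lower
    (a b ε α : ℝ) (ha : a < 0) (hb : 0 < b) (hε : 0 ≤ ε) (hα : 1 < α)
    (μ ν : Measure ℝ) [IsProbabilityMeasure μ] [IsProbabilityMeasure ν]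
    (hμsupp : μ (Set.Icc a b) = 1) (hνsupp : ν (Set.Icc a b) = 1)
    (h₁ : ∀ S : Set ℝ, MeasurableSet S →
      (μ S).toReal ≤ (Real.exp ε * (ν S).toReal) ^ ((α - 1) / α))
    (h₂ : ∀ S : Set ℝ, MeasurableSet S →
      (ν S).toReal ≤ (Real.exp ε * (μ S).toReal) ^ ((α - 1) / α)) :
    ∫ x, x ∂μ ≥
      Real.exp (-ε) * (b ^ (-1 / α) * ∫ x, max x 0 ∂ν) ^ (α / (α - 1))
        - (-a) ^ (1 / α) * (Real.exp ε * ∫ x, max (-x) 0 ∂ν) ^ ((α - 1) / α) :=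
  rdp_real_valued_expected_outcomes_lower_general ha hb hα measurable_id
    ((mem_ae_iff_prob_eq_one measurableSet_Icc).2 hμsupp)
    ((mem_ae_iff_prob_eq_one measurableSet_Icc).2 hνsupp) h₁ h₂
end
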